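/- For m = 7, the form P_7(x₁) + P_7(x₂) + P_7(x₃) + P_7(x₄) (sum of four generalized heptagonal numbers) is universal, i.e., every positive integer is a sum of four generalized heptagonal numbers, while P_7(x₁) + P_7(x₂) + P_7(x₃) does not represent 10. -/

import Mathlib

/-- The generalized `m`-gonal number `P_m(x) = ((m-2)x² - (m-4)x)/2`. -/
def polygonal (m x : ℤ) : ℤ := ((m - 2) * x ^ 2 - (m - 4) * x) / 2

/-!
Let `a` and `b` be odd with `b ^ 2 < 4 * a`. Following Cauchy, a representation of `4 * a - b ^ 2`
as a sum of three squares turns into four integers with sum `b` and sum of squares `a`, hence into a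
representation of `N = ((m - 2) * a - (m - 4) * b) / 2` by four `m`-gonal numbers. For `m = 7` such
an `a` exists as soon as `b` is odd and congruent to `N` modulo `5`; the choice of `b` in `[-3, 5]`
also satisfies `b ^ 2 < 4 * a`, unless `N` is `2`, `5` or `7`.

Since `4 * a - b ^ 2` is `3` modulo `8`, this needs Gauss's theorem only for `n ≡ 3 [MOD 8]`.
Dirichlet's theorem provides a prime `p ≡ 1 [MOD 4]` with `2 * p + 1 = d * n` and `d ≡ 1 [MOD 8]`;
reciprocity makes `-d` a square modulo `2 * p`, which yields a positive definite ternary form of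
determinant `1` representing `n`. By Hermite's bound on its minimum such a form represents `1`;
splitting off that vector and repeating shows that it is a sum of three squares of linear forms.
-/

open Matrix Module

section PivotalCondensation

variable {R : Type*} [CommRing R] {n : ℕ} {A : Matrix (Fin (n + 1)) (Fin (n + 1)) R}

/-- Chiò's pivotal condensation of `A`: the matrix of the `2 × 2` minors containing the entry
`A 0 0`, that is, `A 0 0` times its Schur complement, with no division. It carries out one step of
completing the square in a quadratic form. -/
def pivotCondensation (A : Matrix (Fin (n + 1)) (Fin (n + 1)) R) : Matrix (Fin n) (Fin n) R :=
  of fun i j => A 0 0 * A i.succ j.succ - A i.succ 0 * A 0 j.succ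

theorem mul_det_pivotCondensation (A : Matrix (Fin (n + 1)) (Fin (n + 1)) R) :
    A 0 0 * (pivotCondensation A).det = A 0 0 ^ n * A.det := by
  let scaled : Matrix (Fin (n + 1)) (Fin (n + 1)) R :=
    of fun i j => vecCons (1 : R) (fun _ => A 0 0) i * A i j
  let cleared : Matrix (Fin (n + 1)) (Fin (n + 1)) R :=
    of (vecCons (A 0) fun i => vecCons 0 (pivotCondensation A i))
  have hminor : cleared.submatrix Fin.succ Fin.succ = pivotCondensation A := by
    ext i j
    simp [cleared]
  calc A 0 0 * (pivotCondensation A).det = cleared.det := by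
        simp [det_succ_column_zero, Fin.sum_univ_succ, hminor, cleared]
    _ = scaled.det := by
        refine (det_eq_of_forall_row_eq_smul_add_const
          (vecCons 0 fun i => A i.succ 0) 0 rfl fun i j => ?_).symm
        cases i using Fin.cases <;> cases j using Fin.cases <;>
          simp [scaled, cleared, pivotCondensation, mul_comm]
    _ = A 0 0 ^ n * A.det := by
        simp [scaled, det_mul_column, Fin.prod_univ_succ]

theorem isSymm_pivotCondensation (hA : A.IsSymm) : (pivotCondensation A).IsSymm := by
  ext i j
  simp [pivotCondensation, hA.apply, mul_comm]

theorem mul_dotProduct_mulVec_eq_add_pivotCondensation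
    (A : Matrix (Fin (n + 1)) (Fin (n + 1)) R) (v w : Fin (n + 1) → R) :
    A 0 0 * (v ⬝ᵥ A *ᵥ w) =
      (v ⬝ᵥ Aᵀ 0) * (A 0 ⬝ᵥ w) + vecTail v ⬝ᵥ pivotCondensation A *ᵥ vecTail w := by
  let bordered : Matrix (Fin (n + 1)) (Fin (n + 1)) R :=
    of (vecCons 0 fun i => vecCons 0 (pivotCondensation A i))
  have hsplit : A 0 0 • A = vecMulVec (Aᵀ 0) (A 0) + bordered := by
    ext i j
    cases i using Fin.cases <;> cases j using Fin.cases <;>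
      simp [bordered, vecMulVec, pivotCondensation, mul_comm]
  have hbordered : v ⬝ᵥ bordered *ᵥ w = vecTail v ⬝ᵥ pivotCondensation A *ᵥ vecTail w := by
    simp [bordered, dotProduct, mulVec, Fin.sum_univ_succ, vecTail]
  calc A 0 0 * (v ⬝ᵥ A *ᵥ w) = v ⬝ᵥ (A 0 0 • A) *ᵥ w := by
        rw [smul_mulVec, dotProduct_smul, smul_eq_mul]
    _ = (v ⬝ᵥ Aᵀ 0) * (A 0 ⬝ᵥ w) + v ⬝ᵥ bordered *ᵥ w := by
        rw [hsplit, add_mulVec, dotProduct_add, vecMulVec_mulVec, dotProduct_smul,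
          op_smul_eq_mul]
    _ = _ := by rw [hbordered]

theorem mul_dotProduct_mulVec_eq_sq_add (hA : A.IsSymm) (v : Fin (n + 1) → R) :
    A 0 0 * (v ⬝ᵥ A *ᵥ v) =
      (A 0 ⬝ᵥ v) ^ 2 + vecTail v ⬝ᵥ pivotCondensation A *ᵥ vecTail v := by
  rw [mul_dotProduct_mulVec_eq_add_pivotCondensation, hA.eq, dotProduct_comm v, sq]

theorem exists_eq_transpose_mul_self_of_pivotCondensation (hA : A.IsSymm) (h : A 0 0 = 1)
    {W : Matrix (Fin n) (Fin n) R} (hW : pivotCondensation A = Wᵀ * W) :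
    ∃ V : Matrix (Fin (n + 1)) (Fin (n + 1)) R, A = Vᵀ * V := by
  refine ⟨of (vecCons (A 0) fun i => vecCons 0 (W i)), ?_⟩
  have hentry (i j : Fin n) :
      A i.succ j.succ = A i.succ 0 * A 0 j.succ + ∑ k, W k i * W k j := by
    have := congrFun₂ hW i j
    simp only [pivotCondensation, of_apply, mul_apply, transpose_apply, h, one_mul] at this
    linear_combination this
  ext i j
  cases i using Fin.cases <;> cases j using Fin.cases <;>
    simp [mul_apply, Fin.sum_univ_succ, h, hentry, hA.apply]

end PivotalCondensation

section PosDef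

theorem posDef_transpose_mul_mul_of_isUnit {R ι : Type*} [CommRing R] [PartialOrder R] [StarRing R]
    [TrivialStar R] [Fintype ι] [DecidableEq ι] {A U : Matrix ι ι R} (hA : A.PosDef)
    (hU : IsUnit U) : (Uᵀ * A * U).PosDef := by
  rw [← conjTranspose_eq_transpose_of_trivial]
  exact hA.conjTranspose_mul_mul_same (mulVec_injective_of_isUnit hU)

variable {R : Type*} [CommRing R] [LinearOrder R] [IsStrictOrderedRing R] [StarRing R]
  [TrivialStar R] {n : ℕ}

theorem posDef_iff_pivotCondensation {A : Matrix (Fin (n + 1)) (Fin (n + 1)) R} (hA : A.IsSymm) :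
    A.PosDef ↔ 0 < A 0 0 ∧ (pivotCondensation A).PosDef := by
  refine ⟨fun h => ⟨h.diag_pos, .of_dotProduct_mulVec_pos
      (isHermitian_iff_isSymm.2 (isSymm_pivotCondensation hA)) fun y hy => ?_⟩,
    fun ⟨hpivot, h⟩ => .of_dotProduct_mulVec_pos (isHermitian_iff_isSymm.2 hA) fun v hv => ?_⟩
  · have hpivot : 0 < A 0 0 := h.diag_pos
    -- `y` lifts, up to scaling, to a vector orthogonal to the first basis vector.
    let v : Fin (n + 1) → R := vecCons (-(vecTail (A 0) ⬝ᵥ y)) (A 0 0 • y)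
    have htail : vecTail v = A 0 0 • y := rfl
    have hrow : A 0 ⬝ᵥ v = 0 := by
      simp [v, dotProduct, Fin.sum_univ_succ, Finset.mul_sum, mul_left_comm, vecTail]
    have hv : v ≠ 0 := fun hv => smul_ne_zero hpivot.ne' hy (by rw [← htail, hv]; rfl)
    have hpos := mul_pos hpivot (h.dotProduct_mulVec_pos hv)
    rw [star_trivial, mul_dotProduct_mulVec_eq_sq_add hA, hrow, htail] at hpos
    simpa [mulVec_smul, hpivot] using hpos
  · refine pos_of_mul_pos_right (a := A 0 0) ?_ hpivot.le
    rw [star_trivial, mul_dotProduct_mulVec_eq_sq_add hA]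
    by_cases htail : vecTail v = 0
    · have hv0 : v 0 ≠ 0 := fun h0 => hv (by rw [← cons_head_tail v, htail, vecHead, h0]; simp)
      have hrow : A 0 ⬝ᵥ v = A 0 0 * v 0 := by
        rw [← cons_head_tail v, htail]
        simp [vecHead, dotProduct, Fin.sum_univ_succ]
      rw [hrow, htail, zero_dotProduct, add_zero]
      positivity
    · have := h.dotProduct_mulVec_pos htail
      rw [star_trivial] at this
      positivity

theorem posDef_fin_three {A : Matrix (Fin 3) (Fin 3) R} (hA : A.IsSymm) (h₁ : 0 < A 0 0)
    (h₂ : 0 < A 0 0 * A 1 1 - A 1 0 * A 0 1) (h₃ : 0 < A.det) : A.PosDef := by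
  set C := pivotCondensation A
  have hCsymm : C.IsSymm := isSymm_pivotCondensation hA
  have hCpivot : 0 < C 0 0 := h₂
  have hCdet : 0 < C.det := by
    refine pos_of_mul_pos_right (a := A 0 0) ?_ h₁.le
    rw [mul_det_pivotCondensation]
    positivity
  have hCCdet : 0 < (pivotCondensation C).det := by
    refine pos_of_mul_pos_right (a := C 0 0) ?_ h₂.le
    rw [mul_det_pivotCondensation]
    positivity
  rw [det_fin_one] at hCCdet
  rw [posDef_iff_pivotCondensation hA, posDef_iff_pivotCondensation hCsymm,
    posDef_iff_pivotCondensation (isSymm_pivotCondensation hCsymm)]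
  exact ⟨h₁, hCpivot, hCCdet, .of_dotProduct_mulVec_pos (Subsingleton.elim _ _) fun v hv =>
    (hv (Subsingleton.elim _ _)).elim⟩

end PosDef

section IntegralForms

theorem le_dotProduct_transpose_mul_mul_mulVec {R ι : Type*} [CommRing R] [LE R] [Fintype ι]
    [DecidableEq ι] {A U : Matrix ι ι R} (hU : IsUnit U) {m : R}
    (hm : ∀ v ≠ 0, m ≤ v ⬝ᵥ A *ᵥ v) {v : ι → R} (hv : v ≠ 0) :
    m ≤ v ⬝ᵥ (Uᵀ * A * U) *ᵥ v := by
  have hUv : U *ᵥ v ≠ 0 := fun h => hv (mulVec_injective_of_isUnit hU (by rw [h, mulVec_zero]))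
  simpa only [dotProduct_mulVec, ← vecMul_vecMul, vecMul_transpose] using hm _ hUv

theorem det_transpose_mul_mul_of_isUnit {ι : Type*} [Fintype ι] [DecidableEq ι]
    {U : Matrix ι ι ℤ} (hU : IsUnit U) (A : Matrix ι ι ℤ) : (Uᵀ * A * U).det = A.det := by
  have hsq : U.det * U.det = 1 := Int.isUnit_mul_self ((isUnit_iff_isUnit_det U).1 hU)
  rw [det_mul, det_mul, det_transpose, mul_right_comm, hsq, one_mul]

theorem exists_basis_smul_apply_eq {ι R M : Type*} [Finite ι] [CommRing R] [IsDomain R]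
    [IsPrincipalIdealRing R] [AddCommGroup M] [Module R M] (b : Basis ι R M) (i : ι) {v : M}
    (hv : v ≠ 0) : ∃ (b' : Basis ι R M) (c : R), c • b' i = v := by
  classical
  have : Module.Free R M := .of_basis b
  obtain ⟨n, snf⟩ := Submodule.smithNormalForm b (R ∙ v)
  let bv : Basis Unit R (R ∙ v) :=
    (Basis.singleton Unit R).map (LinearEquiv.toSpanNonzeroSingleton R M v hv)
  let k : Fin n := bv.indexEquiv snf.bN ()
  have : Unique (Fin n) := (bv.indexEquiv snf.bN).symm.unique
  obtain ⟨c, hc⟩ := snf.bN.mem_submodule_iff.mp (Submodule.mem_span_singleton_self v)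
  refine ⟨snf.bM.reindex (Equiv.swap (snf.f k) i), c k * snf.a k, ?_⟩
  rw [Finsupp.sum_fintype _ _ (by simp), Fintype.sum_subsingleton _ k, snf.snf] at hc
  simp [mul_smul, ← hc]

theorem exists_dotProduct_mulVec_minimal {ι : Type*} [Fintype ι] [Nonempty ι] {A : Matrix ι ι ℤ}
    (hA : A.PosDef) : ∃ v ≠ 0, ∀ w ≠ 0, v ⬝ᵥ A *ᵥ v ≤ w ⬝ᵥ A *ᵥ w := by
  obtain ⟨v, hv, hmin⟩ := (measure fun v : ι → ℤ => (v ⬝ᵥ A *ᵥ v).toNat).wf.has_min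
    {v | v ≠ 0} (exists_ne 0)
  refine ⟨v, hv, fun w hw => ?_⟩
  have hpos : 0 < w ⬝ᵥ A *ᵥ w := hA.dotProduct_mulVec_pos hw
  have hle : (v ⬝ᵥ A *ᵥ v).toNat ≤ (w ⬝ᵥ A *ᵥ w).toNat := not_lt.1 (hmin w hw)
  omega

theorem exists_isUnit_transpose_mul_mul_apply_zero_le {n : ℕ}
    {A : Matrix (Fin (n + 1)) (Fin (n + 1)) ℤ} (hA : A.PosDef) :
    ∃ U : Matrix (Fin (n + 1)) (Fin (n + 1)) ℤ, IsUnit U ∧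
      ∀ v ≠ 0, (Uᵀ * A * U) 0 0 ≤ v ⬝ᵥ (Uᵀ * A * U) *ᵥ v := by
  obtain ⟨v, hv, hmin⟩ := exists_dotProduct_mulVec_minimal hA
  obtain ⟨b, c, rfl⟩ := exists_basis_smul_apply_eq (Pi.basisFun ℤ (Fin (n + 1))) 0 hv
  have hU : IsUnit (of b)ᵀ :=
    .of_mul_eq_one _ (Basis.toMatrix_mul_toMatrix_flip (Pi.basisFun ℤ _) b)
  refine ⟨(of b)ᵀ, hU, fun _ => le_dotProduct_transpose_mul_mul_mulVec hU fun w hw => ?_⟩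
  have hc : 0 < c ^ 2 := sq_pos_of_ne_zero (left_ne_zero_of_smul hv)
  have hpos : 0 < b 0 ⬝ᵥ A *ᵥ b 0 := hA.dotProduct_mulVec_pos (b.ne_zero 0)
  calc ((of b)ᵀᵀ * A * (of b)ᵀ) 0 0 = b 0 ⬝ᵥ A *ᵥ b 0 := by
        rw [Matrix.mul_assoc]; rfl
    _ ≤ c ^ 2 * (b 0 ⬝ᵥ A *ᵥ b 0) := le_mul_of_one_le_left hpos.le hc
    _ = (c • b 0) ⬝ᵥ A *ᵥ (c • b 0) := by
        rw [mulVec_smul, smul_dotProduct, dotProduct_smul, smul_eq_mul, smul_eq_mul]; ring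
    _ ≤ w ⬝ᵥ A *ᵥ w := hmin w hw

theorem exists_abs_two_mul_add_mul_le {m : ℤ} (hm : 0 < m) (t : ℤ) :
    ∃ k : ℤ, |2 * (m * k + t)| ≤ m := by
  lift m to ℕ using hm.le
  refine ⟨-t.bdiv m, ?_⟩
  have := t.bmod_eq_self_sub_mul_bdiv m
  have := Int.le_bmod (x := t) (m := m) (by omega)
  have := Int.bmod_lt (x := t) (m := m) (by omega)
  rw [mul_neg]
  grind

theorem three_mul_sq_le_four_mul_pivotCondensation {n : ℕ}
    {A : Matrix (Fin (n + 1)) (Fin (n + 1)) ℤ} (hA : A.PosDef)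
    (hmin : ∀ v ≠ 0, A 0 0 ≤ v ⬝ᵥ A *ᵥ v) {w : Fin n → ℤ} (hw : w ≠ 0) :
    3 * A 0 0 ^ 2 ≤ 4 * (w ⬝ᵥ pivotCondensation A *ᵥ w) := by
  obtain ⟨k, hk⟩ := exists_abs_two_mul_add_mul_le (hA.diag_pos (i := 0)) (vecTail (A 0) ⬝ᵥ w)
  let v : Fin (n + 1) → ℤ := vecCons k w
  have hv : v ≠ 0 := fun hv => hw (congrArg vecTail hv)
  have hrow : A 0 ⬝ᵥ v = A 0 0 * k + vecTail (A 0) ⬝ᵥ w := dotProduct_cons (A 0) k w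
  have hsq : (2 * (A 0 ⬝ᵥ v)) ^ 2 ≤ A 0 0 ^ 2 := by
    rw [hrow]
    exact sq_le_sq' (abs_le.1 hk).1 (abs_le.1 hk).2
  have hcompl : A 0 0 * (v ⬝ᵥ A *ᵥ v) = (A 0 ⬝ᵥ v) ^ 2 + w ⬝ᵥ pivotCondensation A *ᵥ w :=
    mul_dotProduct_mulVec_eq_sq_add (isHermitian_iff_isSymm.1 hA.isHermitian) v
  have := mul_le_mul_of_nonneg_left (hmin v hv) (hA.diag_pos (i := 0)).le
  linarith

theorem hermite_inequality {n : ℕ} {A : Matrix (Fin n) (Fin n) ℤ} (hA : A.PosDef) {m : ℤ}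
    (hm : 0 ≤ m) (hmin : ∀ v ≠ 0, m ≤ v ⬝ᵥ A *ᵥ v) :
    3 ^ n.choose 2 * m ^ n ≤ 4 ^ n.choose 2 * A.det := by
  induction n generalizing m with
  | zero => simp
  | succ n ih =>
    obtain ⟨U, hU, hBmin⟩ := exists_isUnit_transpose_mul_mul_apply_zero_le hA
    rw [← det_transpose_mul_mul_of_isUnit hU A]
    have hB := posDef_transpose_mul_mul_of_isUnit hA hU
    have hmB : m ≤ (Uᵀ * A * U) 0 0 := by
      have hsingle : (Pi.single 0 1 : Fin (n + 1) → ℤ) ≠ 0 := by simp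
      simpa using le_dotProduct_transpose_mul_mul_mulVec hU hmin hsingle
    generalize Uᵀ * A * U = B at *
    have hBsymm := isHermitian_iff_isSymm.1 hB.isHermitian
    obtain ⟨hpivot, hC⟩ := (posDef_iff_pivotCondensation hBsymm).1 hB
    have hCmin (w : Fin n → ℤ) (hw : w ≠ 0) :
        3 * B 0 0 ^ 2 ≤ w ⬝ᵥ ((4 : ℤ) • pivotCondensation B) *ᵥ w := by
      rw [smul_mulVec, dotProduct_smul, smul_eq_mul]
      exact three_mul_sq_le_four_mul_pivotCondensation hB hBmin hw
    have hCdet := ih (hC.smul four_pos) (by positivity) hCmin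
    rw [det_smul, Fintype.card_fin] at hCdet
    have hchoose : (n + 1).choose 2 = n.choose 2 + n := by
      rw [Nat.choose_succ_succ', Nat.choose_one_right, add_comm]
    calc 3 ^ (n + 1).choose 2 * m ^ (n + 1)
        ≤ 3 ^ (n + 1).choose 2 * B 0 0 ^ (n + 1) := by gcongr
      _ ≤ 4 ^ (n + 1).choose 2 * B.det := by
        refine le_of_mul_le_mul_left ?_ (pow_pos hpivot n)
        calc B 0 0 ^ n * (3 ^ (n + 1).choose 2 * B 0 0 ^ (n + 1))
            = B 0 0 * (3 ^ n.choose 2 * (3 * B 0 0 ^ 2) ^ n) := by rw [hchoose]; ring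
          _ ≤ B 0 0 * (4 ^ n.choose 2 * (4 ^ n * (pivotCondensation B).det)) := by gcongr
          _ = 4 ^ (n + 1).choose 2 * (B 0 0 * (pivotCondensation B).det) := by rw [hchoose]; ring
          _ = B 0 0 ^ n * (4 ^ (n + 1).choose 2 * B.det) := by
            rw [mul_det_pivotCondensation]; ring

theorem apply_zero_zero_eq_one_of_det_eq_one {n : ℕ} (hn : n < 5)
    {A : Matrix (Fin (n + 1)) (Fin (n + 1)) ℤ} (hA : A.PosDef) (hdet : A.det = 1)
    (hmin : ∀ v ≠ 0, A 0 0 ≤ v ⬝ᵥ A *ᵥ v) : A 0 0 = 1 := by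
  have hpos : 0 < A 0 0 := hA.diag_pos
  by_contra hne
  have htwo : 2 ≤ A 0 0 := by omega
  have hermite := hermite_inequality hA zero_le_two fun v hv => htwo.trans (hmin v hv)
  rw [hdet] at hermite
  -- Hermite's inequality gives `A 0 0 ^ 2 ≤ (4 / 3) ^ n`, and `(4 / 3) ^ n < 4` for `n ≤ 4`.
  interval_cases n <;> norm_num [Nat.choose] at hermite

theorem exists_eq_transpose_mul_self_of_det_eq_one {n : ℕ} (hn : n ≤ 5)
    {A : Matrix (Fin n) (Fin n) ℤ} (hA : A.PosDef) (hdet : A.det = 1) :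
    ∃ V : Matrix (Fin n) (Fin n) ℤ, A = Vᵀ * V := by
  induction n with
  | zero => exact ⟨0, Subsingleton.elim _ _⟩
  | succ n ih =>
    obtain ⟨U, hU, hBmin⟩ := exists_isUnit_transpose_mul_mul_apply_zero_le hA
    have hB := posDef_transpose_mul_mul_of_isUnit hA hU
    have hBsymm : (Uᵀ * A * U).IsSymm := isHermitian_iff_isSymm.1 hB.isHermitian
    have hBdet := (det_transpose_mul_mul_of_isUnit hU A).trans hdet
    have hpivot := apply_zero_zero_eq_one_of_det_eq_one hn hB hBdet hBmin
    have hCdet : (pivotCondensation (Uᵀ * A * U)).det = 1 := by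
      simpa [hpivot, hBdet] using mul_det_pivotCondensation (Uᵀ * A * U)
    obtain ⟨W, hW⟩ := ih (by omega) ((posDef_iff_pivotCondensation hBsymm).1 hB).2 hCdet
    obtain ⟨V, hV⟩ := exists_eq_transpose_mul_self_of_pivotCondensation hBsymm hpivot hW
    have hUdet := (isUnit_iff_isUnit_det U).1 hU
    refine ⟨V * U⁻¹, ?_⟩
    calc A = (U⁻¹)ᵀ * (Uᵀ * A * U) * U⁻¹ := by
          rw [transpose_nonsing_inv, Matrix.mul_assoc, Matrix.mul_assoc, Matrix.mul_assoc,
            mul_nonsing_inv U hUdet, Matrix.mul_one,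
            nonsing_inv_mul_cancel_left _ _ (by rwa [det_transpose])]
      _ = (V * U⁻¹)ᵀ * (V * U⁻¹) := by
          rw [hV, transpose_mul, Matrix.mul_assoc, Matrix.mul_assoc, Matrix.mul_assoc]

end IntegralForms

section ThreeSquares

theorem exists_prime_two_mul_add_one_eq_mul {n : ℕ} (hn : n % 8 = 3) :
    ∃ p d : ℕ, p.Prime ∧ p % 4 = 1 ∧ d % 8 = 1 ∧ 2 * p + 1 = d * n := by
  obtain ⟨m, rfl⟩ : ∃ m, n = 2 * m + 1 := ⟨n / 2, by omega⟩
  have hcop : m.Coprime (4 * (2 * m + 1)) := by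
    have hm : m.Coprime (2 ^ 2) := (Nat.coprime_two_right.2 (Nat.odd_iff.2 (by omega))).pow_right 2
    exact hm.mul_right (by simp)
  obtain ⟨p, hlt, hp, hmod⟩ :=
    Nat.forall_exists_prime_gt_and_modEq m (q := 4 * (2 * m + 1)) (by omega) hcop
  obtain ⟨j, hj⟩ := (Nat.modEq_iff_dvd' hlt.le).1 hmod.symm
  obtain rfl : p = 4 * ((2 * m + 1) * j) + m := by rw [← mul_assoc]; omega
  exact ⟨_, 8 * j + 1, hp, by omega, by omega, by ring⟩

theorem jacobiSym_neg_eq_one_of_dvd {p d : ℕ} (hp : p % 4 = 1) (hd : d % 8 = 1)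
    (hdvd : d ∣ 2 * p + 1) : jacobiSym (-d) p = 1 := by
  have hp_odd : Odd p := Nat.odd_iff.2 (by omega)
  have hd_odd : Odd d := Nat.odd_iff.2 (by omega)
  have htwo : jacobiSym 2 d = 1 := by
    rw [jacobiSym.at_two hd_odd, ZMod.χ₈_nat_mod_eight, hd]
    rfl
  have hneg : jacobiSym (2 * p : ℤ) d = jacobiSym (-1) d := by
    refine jacobiSym.mod_left' (Int.modEq_iff_dvd.2 ?_).symm
    rw [sub_neg_eq_add]
    exact_mod_cast hdvd
  calc jacobiSym (-d) p = jacobiSym d p := by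
        rw [jacobiSym.neg _ hp_odd, ZMod.χ₄_nat_one_mod_four hp, one_mul]
    _ = jacobiSym p d := jacobiSym.quadratic_reciprocity_one_mod_four' hd_odd hp
    _ = jacobiSym (2 * p) d := by rw [jacobiSym.mul_left, htwo, one_mul]
    _ = 1 := by rw [hneg, jacobiSym.at_neg_one hd_odd, ZMod.χ₄_nat_one_mod_four (by omega)]

theorem exists_two_mul_dvd_sq_sub {p : ℕ} (hp : Odd p) {a : ℤ} (ha : Odd a)
    (hsq : IsSquare (a : ZMod p)) : ∃ e : ℤ, 2 * (p : ℤ) ∣ e ^ 2 - a := by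
  obtain ⟨y, hy⟩ := hsq
  obtain ⟨r, rfl⟩ := ZMod.intCast_surjective y
  have hr : (p : ℤ) ∣ r ^ 2 - a := by
    rw [← ZMod.intCast_zmod_eq_zero_iff_dvd]
    push_cast
    rw [hy, sq, sub_self]
  obtain ⟨e, he_odd, he⟩ : ∃ e : ℤ, Odd e ∧ (p : ℤ) ∣ e ^ 2 - a := by
    rcases Int.even_or_odd r with hr_even | hr_odd
    · refine ⟨r + p, hr_even.add_odd (by exact_mod_cast hp), ?_⟩
      have : (r + p) ^ 2 - a = (r ^ 2 - a) + p * (2 * r + p) := by ring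
      exact this ▸ hr.add (dvd_mul_right _ _)
    · exact ⟨r, hr_odd, hr⟩
  have hcop : IsCoprime (2 : ℤ) p := by
    exact_mod_cast Nat.isCoprime_iff_coprime.2 (Nat.coprime_two_left.2 hp)
  exact ⟨e, hcop.mul_dvd (he_odd.pow.sub_odd ha).two_dvd he⟩

theorem sum_three_squares_of_mul_sub_eq_one {g e q n : ℤ} (hq : 0 < q) (hminor : 0 < q * g - e ^ 2)
    (h : (q * g - e ^ 2) * n - q = 1) : ∃ u v w : ℤ, u ^ 2 + v ^ 2 + w ^ 2 = n := by
  let A : Matrix (Fin 3) (Fin 3) ℤ := !![g, e, 1; e, q, 0; 1, 0, n]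
  have hg : 0 < g := pos_of_mul_pos_right (by linarith [sq_nonneg e]) hq.le
  have hminor_eq : A 0 0 * A 1 1 - A 1 0 * A 0 1 = q * g - e ^ 2 :=
    show g * q - e * e = q * g - e ^ 2 by ring
  have hdet_eq : A.det = g * q * n - e * e * n - q := by simp [A, det_fin_three]
  have hdet : A.det = 1 := by linear_combination hdet_eq + h
  have hsymm : A.IsSymm := by
    ext i j
    fin_cases i <;> fin_cases j <;> rfl
  have hA : A.PosDef := posDef_fin_three hsymm hg (hminor_eq ▸ hminor) (hdet ▸ one_pos)
  obtain ⟨V, hV⟩ := exists_eq_transpose_mul_self_of_det_eq_one (by simp) hA hdet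
  refine ⟨V 0 2, V 1 2, V 2 2, ?_⟩
  calc V 0 2 ^ 2 + V 1 2 ^ 2 + V 2 2 ^ 2 = (Vᵀ * V) 2 2 := by
        simp [mul_apply, Fin.sum_univ_three, sq]
    _ = n := by rw [← hV]; rfl

theorem sum_three_squares_of_mod_eight_eq_three {n : ℕ} (hn : n % 8 = 3) :
    ∃ u v w : ℤ, u ^ 2 + v ^ 2 + w ^ 2 = n := by
  obtain ⟨p, d, hp, hp_mod, hd_mod, hpd⟩ := exists_prime_two_mul_add_one_eq_mul hn
  have : Fact p.Prime := ⟨hp⟩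
  have hp_odd : Odd p := Nat.odd_iff.2 (by omega)
  have hd_odd : Odd (-d : ℤ) := Odd.neg (Int.odd_iff.2 (by omega))
  have hsq : IsSquare ((-d : ℤ) : ZMod p) :=
    ZMod.isSquare_of_jacobiSym_eq_one (jacobiSym_neg_eq_one_of_dvd hp_mod hd_mod ⟨n, hpd⟩)
  obtain ⟨e, g, hg⟩ := exists_two_mul_dvd_sq_sub hp_odd hd_odd hsq
  have hd : 2 * (p : ℤ) * g - e ^ 2 = d := by linarith
  have hdn : 2 * (p : ℤ) + 1 = d * n := by exact_mod_cast hpd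
  have hp_pos := hp.pos
  refine sum_three_squares_of_mul_sub_eq_one (g := g) (e := e) (q := 2 * p) ?_ ?_ ?_
  · positivity
  · omega
  · rw [hd, ← hdn, add_sub_cancel_left]

theorem odd_of_sum_three_squares_mod_eight_eq_three {u v w : ℤ}
    (h : (u ^ 2 + v ^ 2 + w ^ 2) % 8 = 3) : Odd u ∧ Odd v ∧ Odd w := by
  have sq_mod (x : ℤ) : Odd x ∧ x ^ 2 % 8 = 1 ∨ x ^ 2 % 4 = 0 := by
    rcases Int.even_or_odd x with ⟨k, rfl⟩ | hx
    · right
      ring_nf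
      omega
    · have := Int.eight_dvd_sq_sub_one_of_odd hx
      exact .inl ⟨hx, by omega⟩
  rcases sq_mod u with ⟨hu, _⟩ | _ <;> rcases sq_mod v with ⟨hv, _⟩ | _ <;>
    rcases sq_mod w with ⟨hw, _⟩ | _ <;> first | exact ⟨hu, hv, hw⟩ | omega

theorem cauchy_lemma {a b : ℤ} (ha : Odd a) (hb : Odd b) (hab : b ^ 2 < 4 * a) :
    ∃ x y z w : ℤ, x + y + z + w = b ∧ x ^ 2 + y ^ 2 + z ^ 2 + w ^ 2 = a := by
  have hb_sq := Int.eight_dvd_sq_sub_one_of_odd hb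
  have ha_mod := Int.odd_iff.1 ha
  obtain ⟨u, v, w, h⟩ :=
    sum_three_squares_of_mod_eight_eq_three (n := (4 * a - b ^ 2).toNat) (by omega)
  rw [Int.toNat_of_nonneg (by omega)] at h
  obtain ⟨⟨k, hk⟩, ⟨l, hl⟩, ⟨m, hm⟩⟩ :=
    odd_of_sum_three_squares_mod_eight_eq_three (u := u) (v := v) (w := w) (by omega)
  obtain ⟨c, hc⟩ := hb
  -- Changing the sign of `w` changes the sum by `2` modulo `4`, as `w` is odd.
  wlog hsum : 4 ∣ b + u + v + w generalizing w m
  · exact this (-w) (by rwa [neg_sq]) (-m - 1) (by omega) (by omega)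
  obtain ⟨x, hx⟩ := hsum
  have hy : b + u - v - w = 4 * (c + k + 1 - x) := by omega
  have hz : b - u + v - w = 4 * (c + l + 1 - x) := by omega
  have ht : b - u - v + w = 4 * (c + m + 1 - x) := by omega
  refine ⟨x, c + k + 1 - x, c + l + 1 - x, c + m + 1 - x, by omega, ?_⟩
  have : (b + u + v + w) ^ 2 + (b + u - v - w) ^ 2 + (b - u + v - w) ^ 2 + (b - u - v + w) ^ 2 =
      16 * a := by
    linear_combination 4 * h
  rw [hx, hy, hz, ht] at this
  linarith

end ThreeSquares

section Polygonal

theorem two_mul_polygonal (m x : ℤ) : 2 * polygonal m x = (m - 2) * x ^ 2 - (m - 4) * x := by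
  refine Int.mul_ediv_cancel' ?_
  have : (m - 2) * x ^ 2 - (m - 4) * x = m * (x * (x - 1)) + 2 * (2 * x - x ^ 2) := by ring
  rw [this]
  exact ((Int.even_mul_pred_self x).two_dvd.mul_left m).add (dvd_mul_right _ _)

theorem polygonal_nonneg {m : ℤ} (hm : 3 ≤ m) (x : ℤ) : 0 ≤ polygonal m x := by
  have hsub : 0 ≤ x ^ 2 - x := sub_nonneg.2 (Int.le_self_sq x)
  have hadd : 0 ≤ x ^ 2 + x := by linarith [Int.le_self_sq (-x), neg_sq x]
  have hsplit : 2 * polygonal m x = (m - 3) * (x ^ 2 - x) + (x ^ 2 + x) := by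
    rw [two_mul_polygonal]
    ring
  have := mul_nonneg (sub_nonneg.2 hm) hsub
  linarith

theorem exists_four_polygonal_eq {m a b N : ℤ} (ha : Odd a) (hb : Odd b) (hab : b ^ 2 < 4 * a)
    (hN : 2 * N = (m - 2) * a - (m - 4) * b) :
    ∃ x₁ x₂ x₃ x₄ : ℤ,
      polygonal m x₁ + polygonal m x₂ + polygonal m x₃ + polygonal m x₄ = N := by
  obtain ⟨x, y, z, w, rfl, rfl⟩ := cauchy_lemma ha hb hab
  refine ⟨x, y, z, w, ?_⟩
  linarith [two_mul_polygonal m x, two_mul_polygonal m y, two_mul_polygonal m z,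
    two_mul_polygonal m w]

theorem exists_four_heptagonal_eq {N : ℤ} (hN : 0 < N) (h₂ : N ≠ 2) (h₅ : N ≠ 5) (h₇ : N ≠ 7) :
    ∃ x₁ x₂ x₃ x₄ : ℤ,
      polygonal 7 x₁ + polygonal 7 x₂ + polygonal 7 x₃ + polygonal 7 x₄ = N := by
  obtain ⟨b, a, hb_lower, hb_upper, hb_odd, ha⟩ :
      ∃ b a : ℤ, -3 ≤ b ∧ b ≤ 5 ∧ b % 2 = 1 ∧ 2 * N + 3 * b = 5 * a :=
    ⟨(6 * N + 8) % 10 - 3, (2 * N + 3 * ((6 * N + 8) % 10 - 3)) / 5, by omega⟩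
  have hab : b ^ 2 < 4 * a := by
    interval_cases b <;> omega
  exact exists_four_polygonal_eq (Int.odd_iff.2 (by omega)) (Int.odd_iff.2 hb_odd) hab (by linarith)

theorem heptagonal_eq_of_le_ten {x : ℤ} (hx : polygonal 7 x ≤ 10) :
    polygonal 7 x = 0 ∨ polygonal 7 x = 1 ∨ polygonal 7 x = 4 ∨ polygonal 7 x = 7 := by
  have htwo := two_mul_polygonal 7 x
  have hlower : -2 < x := by nlinarith
  have hupper : x < 3 := by nlinarith
  interval_cases x <;> omega

theorem three_heptagonal_ne_ten (x y z : ℤ) :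
    polygonal 7 x + polygonal 7 y + polygonal 7 z ≠ 10 := by
  intro h
  have hx := polygonal_nonneg (m := 7) (by simp) x
  have hy := polygonal_nonneg (m := 7) (by simp) y
  have hz := polygonal_nonneg (m := 7) (by simp) z
  have := heptagonal_eq_of_le_ten (x := x) (by omega)
  have := heptagonal_eq_of_le_ten (x := y) (by omega)
  have := heptagonal_eq_of_le_ten (x := z) (by omega)
  omega

end Polygonal

theorem four_heptagonal_universal :
    (∀ N : ℤ, 0 < N →
      ∃ x₁ x₂ x₃ x₄ : ℤ,
        polygonal 7 x₁ + polygonal 7 x₂ + polygonal 7 x₃ + polygonal 7 x₄ = N) ∧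
    ¬ ∃ x₁ x₂ x₃ : ℤ,
        polygonal 7 x₁ + polygonal 7 x₂ + polygonal 7 x₃ = 10 := by
  refine ⟨fun N hN => ?_, fun ⟨x, y, z, h⟩ => three_heptagonal_ne_ten x y z h⟩
  obtain rfl | h₂ := eq_or_ne N 2
  · exact ⟨0, 0, 1, 1, rfl⟩
  obtain rfl | h₅ := eq_or_ne N 5
  · exact ⟨0, 0, 1, -1, rfl⟩
  obtain rfl | h₇ := eq_or_ne N 7
  · exact ⟨0, 0, 0, 2, rfl⟩
  exact exists_four_heptagonal_eq hN h₂ h₅ h₇
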